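/- Let F be a field complete with respect to a nonarchimedean absolute value (e.g. Q_ℓ), let V be a finite-dimensional F-vector space of dimension d, and let x₀ ∈ End(V) be such that the F-subalgebra F[x₀] generated by x₀ is a field of degree d over F. Then there is an open neighborhood U of x₀ in End(V) (with its natural topology) such that for every x ∈ U, the subalgebra F[x] is a field of degree d over F. -/

import Mathlib

/-! The algebra `F[x]` is a field of degree `dim V` exactly when the characteristic polynomial of
`x` is irreducible, and the coefficients of the characteristic polynomial are continuous in `x`. So
it is enough that irreducibility of an irreducible `q` of degree `d` survives small perturbations
among monic polynomials of degree `d`. Let `α` be a root of `q` in `L = F[X] / (q)`, with the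
multiplicative norm extending that of `F`. The powers `α ^ i`, `i < d`, are linearly independent and
finite-dimensional subspaces of `L` are closed, so there is `δ > 0` such that `‖g(α)‖ ≥ δ` for all
monic `g` of degree less than `d`. If `p` is close to `q`, then `‖p(α)‖ < δ ^ 2`, which excludes a
factorization `p = g h` into monic polynomials of smaller degree. Unlike Krasner's lemma, this needs
no separability. -/

open Filter Module Polynomial Topology

lemma pow_notMem_span_pow_of_lt_natDegree_minpoly {K A : Type*} [Field K] [Ring A] [Algebra K A]
    {α : A} {m : ℕ} (hm : m < (minpoly K α).natDegree) :
    α ^ m ∉ Submodule.span K ((α ^ ·) '' Set.Iio m) := by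
  have h := (linearIndependent_pow (K := K) α).notMem_span_image (s := Set.Iio ⟨m, hm⟩)
    (x := ⟨m, hm⟩) (by simp)
  refine fun hmem ↦ h (Submodule.span_mono ?_ hmem)
  rintro _ ⟨i, hi, rfl⟩
  exact ⟨⟨i, hi.trans hm⟩, hi, rfl⟩

lemma pow_natDegree_sub_aeval_mem_span_pow {R A : Type*} [CommRing R] [Ring A] [Algebra R A]
    (α : A) {g : R[X]} (hg : g.Monic) :
    α ^ g.natDegree - aeval α g ∈ Submodule.span R ((α ^ ·) '' Set.Iio g.natDegree) := by
  rw [aeval_eq_sum_range, Finset.sum_range_succ, hg.coeff_natDegree, one_smul, sub_add_cancel_right]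
  refine neg_mem (sum_mem fun i hi ↦ Submodule.smul_mem _ _ (Submodule.subset_span ?_))
  exact Set.mem_image_of_mem _ (Finset.mem_range.1 hi)

lemma exists_pos_forall_monic_le_norm_aeval {F A : Type*} [NontriviallyNormedField F]
    [CompleteSpace F] [NormedRing A] [NormedAlgebra F A] (α : A) :
    ∃ δ > 0, ∀ g : F[X], g.Monic → g.natDegree < (minpoly F α).natDegree → δ ≤ ‖aeval α g‖ := by
  let W (m : ℕ) : Submodule F A := Submodule.span F ((α ^ ·) '' Set.Iio m)
  have infDist_pos (m : ℕ) (hm : m < (minpoly F α).natDegree) :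
      0 < Metric.infDist (α ^ m) (W m) := by
    have : FiniteDimensional F (W m) := .span_of_finite F ((Set.finite_Iio m).image _)
    rw [← (W m).closed_of_finiteDimensional.notMem_iff_infDist_pos ⟨0, (W m).zero_mem⟩]
    exact pow_notMem_span_pow_of_lt_natDegree_minpoly hm
  have eventually_le : ∀ᶠ δ in 𝓝[>] (0 : ℝ), ∀ m ∈ Finset.range (minpoly F α).natDegree,
      δ ≤ Metric.infDist (α ^ m) (W m) :=
    (eventually_all_finset _).2 fun m hm ↦
      nhdsWithin_le_nhds (eventually_le_nhds (infDist_pos m (Finset.mem_range.1 hm)))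
  obtain ⟨δ, hδ, δ_pos⟩ := (eventually_le.and self_mem_nhdsWithin).exists
  refine ⟨δ, δ_pos, fun g hg hdeg ↦ (hδ _ (Finset.mem_range.2 hdeg)).trans ?_⟩
  calc Metric.infDist (α ^ g.natDegree) (W g.natDegree)
      ≤ dist (α ^ g.natDegree) (α ^ g.natDegree - aeval α g) :=
        Metric.infDist_le_dist_of_mem (pow_natDegree_sub_aeval_mem_span_pow α hg)
    _ = ‖aeval α g‖ := by rw [dist_eq_norm, sub_sub_cancel]

lemma exists_pos_forall_irreducible_of_norm_aeval_lt {F L : Type*} [NontriviallyNormedField F]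
    [CompleteSpace F] [NormedDivisionRing L] [NormedAlgebra F L] {α : L} (hα : IsIntegral F α) :
    ∃ ε > 0, ∀ p : F[X], p.Monic → p.natDegree = (minpoly F α).natDegree →
      ‖aeval α p‖ < ε → Irreducible p := by
  obtain ⟨δ, δ_pos, hδ⟩ := exists_pos_forall_monic_le_norm_aeval (F := F) α
  refine ⟨δ * δ, mul_pos δ_pos δ_pos, fun p hp hdeg hlt ↦
    hp.irreducible_iff_natDegree.2 ⟨?_, fun g h hg hh hgh ↦ ?_⟩⟩
  · rintro rfl
    exact (minpoly.natDegree_pos hα).ne (natDegree_one.symm.trans hdeg)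
  · by_contra! hne
    have hadd : g.natDegree + h.natDegree = (minpoly F α).natDegree := by
      rw [← hg.natDegree_mul hh, hgh, hdeg]
    refine hlt.not_ge ?_
    calc δ * δ ≤ ‖aeval α g‖ * ‖aeval α h‖ :=
          mul_le_mul (hδ g hg (by omega)) (hδ h hh (by omega)) δ_pos.le (norm_nonneg _)
      _ = ‖aeval α p‖ := by rw [← norm_mul, ← map_mul, hgh]

lemma tendsto_aeval_of_tendsto_coeff {ι R A : Type*} [CommSemiring R] [TopologicalSpace R]
    [Semiring A] [TopologicalSpace A] [ContinuousAdd A] [Algebra R A] [ContinuousSMul R A]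
    {l : Filter ι} {p : ι → R[X]} {q : R[X]} (α : A)
    (hdeg : ∀ᶠ t in l, (p t).natDegree ≤ q.natDegree)
    (hcoeff : ∀ i, Tendsto (fun t ↦ (p t).coeff i) l (𝓝 (q.coeff i))) :
    Tendsto (fun t ↦ aeval α (p t)) l (𝓝 (aeval α q)) := by
  rw [aeval_eq_sum_range]
  refine (tendsto_finsetSum _ fun i _ ↦ (hcoeff i).smul_const (α ^ i)).congr' ?_
  filter_upwards [hdeg] with t ht
  rw [aeval_eq_sum_range' (Nat.lt_succ_of_le ht)]

lemma eventually_irreducible_of_tendsto_coeff {ι F : Type*} [NontriviallyNormedField F]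
    [IsUltrametricDist F] [CompleteSpace F] {l : Filter ι} {p : ι → F[X]} {q : F[X]}
    (hq : Irreducible q) (hmonic : ∀ᶠ t in l, (p t).Monic)
    (hdeg : ∀ᶠ t in l, (p t).natDegree = q.natDegree)
    (hcoeff : ∀ i, Tendsto (fun t ↦ (p t).coeff i) l (𝓝 (q.coeff i))) :
    ∀ᶠ t in l, Irreducible (p t) := by
  have : Fact (Irreducible q) := ⟨hq⟩
  let α : AdjoinRoot q := AdjoinRoot.root q
  have : FiniteDimensional F (AdjoinRoot q) := (AdjoinRoot.powerBasis hq.ne_zero).finite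
  let : NormedField (AdjoinRoot q) := spectralNorm.normedField F (AdjoinRoot q)
  let : NormedAlgebra F (AdjoinRoot q) := spectralNorm.normedAlgebra F (AdjoinRoot q)
  have natDegree_minpoly : (minpoly F α).natDegree = q.natDegree := by
    rw [AdjoinRoot.minpoly_root hq.ne_zero, natDegree_mul_leadingCoeff_inv q hq.ne_zero]
  obtain ⟨ε, ε_pos, hε⟩ :=
    exists_pos_forall_irreducible_of_norm_aeval_lt (Algebra.IsIntegral.isIntegral (R := F) α)
  have hlim : Tendsto (fun t ↦ ‖aeval α (p t)‖) l (𝓝 0) := by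
    simpa only [α, AdjoinRoot.aeval_eq, AdjoinRoot.mk_self, norm_zero] using
      (tendsto_aeval_of_tendsto_coeff α (hdeg.mono fun _ ↦ Eq.le) hcoeff).norm
  filter_upwards [hmonic, hdeg, hlim.eventually_lt_const ε_pos] with t ht_monic ht_deg ht_lt
  exact hε (p t) ht_monic (ht_deg.trans natDegree_minpoly.symm) ht_lt

section Charpoly

variable {F E V : Type*} [NontriviallyNormedField F] [CompleteSpace F]
  [AddCommGroup E] [Module F E] [FiniteDimensional F E] [TopologicalSpace E]
  [IsTopologicalAddGroup E] [ContinuousSMul F E] [T2Space E]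
  [AddCommGroup V] [Module F V] [FiniteDimensional F V]

lemma continuous_coeff_charpoly (φ : E →ₗ[F] End F V) (i : ℕ) :
    Continuous fun x ↦ (φ x).charpoly.coeff i := by
  let b := finBasis F E
  simp only [← φ.polyCharpoly_coeff_eval b]
  exact (MvPolynomial.continuous_eval _).comp <|
    continuous_pi fun j ↦ (b.coord j).continuous_of_finiteDimensional

lemma isOpen_setOf_irreducible_charpoly [IsUltrametricDist F] (φ : E →ₗ[F] End F V) :
    IsOpen {x | Irreducible (φ x).charpoly} :=
  isOpen_iff_mem_nhds.2 fun x hx ↦ eventually_irreducible_of_tendsto_coeff hx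
    (.of_forall fun y ↦ (φ y).charpoly_monic)
    (.of_forall fun y ↦ by rw [(φ y).charpoly_natDegree, (φ x).charpoly_natDegree])
    fun i ↦ (continuous_coeff_charpoly φ i).tendsto x

end Charpoly

section AdjoinSingleton

variable {K A : Type*} [Field K] [Ring A] [Algebra K A]

/-- The isomorphism `K[X] / (minpoly K x) ≃ K[x]` for an element `x` of a possibly noncommutative
`K`-algebra. -/
noncomputable def adjoinRootMinpolyEquivAdjoinSingleton (x : A) :
    AdjoinRoot (minpoly K x) ≃ₐ[K] Algebra.adjoin K {x} :=
  (Ideal.quotientEquivAlgOfEq K (minpoly.ker_aeval_eq_span_minpoly K x).symm).trans <|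
    (Ideal.quotientKerEquivRange (aeval (R := K) x)).trans <|
      Subalgebra.equivOfEq _ _ (Algebra.adjoin_singleton_eq_range_aeval K x).symm

lemma isField_adjoin_singleton_iff {x : A} (hx : IsIntegral K x) :
    IsField (Algebra.adjoin K {x}) ↔ Irreducible (minpoly K x) := by
  rw [← (adjoinRootMinpolyEquivAdjoinSingleton x).toMulEquiv.isField_congr]
  constructor
  · intro h
    have hmax := (Ideal.Quotient.maximal_ideal_iff_isField_quotient _).2 h
    exact ((Ideal.span_singleton_prime (minpoly.ne_zero hx)).1 hmax.isPrime).irreducible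
  · intro h
    have : Fact (Irreducible (minpoly K x)) := ⟨h⟩
    exact Field.toIsField _

lemma finrank_adjoin_singleton {x : A} (hx : IsIntegral K x) :
    finrank K (Algebra.adjoin K {x}) = (minpoly K x).natDegree := by
  rw [← (adjoinRootMinpolyEquivAdjoinSingleton x).toLinearEquiv.finrank_eq,
    (AdjoinRoot.powerBasis (minpoly.ne_zero hx)).finrank, AdjoinRoot.powerBasis_dim]

variable {V : Type*} [AddCommGroup V] [Module K V] [FiniteDimensional K V]

lemma irreducible_charpoly_iff (f : End K V) :
    Irreducible f.charpoly ↔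
      Irreducible (minpoly K f) ∧ (minpoly K f).natDegree = finrank K V := by
  constructor
  · intro h
    have : Nontrivial V := nontrivial_of_finrank_pos (R := K) <|
      f.charpoly_natDegree ▸ h.natDegree_pos
    rw [← minpoly.eq_of_irreducible_of_monic h f.aeval_self_charpoly f.charpoly_monic]
    exact ⟨h, f.charpoly_natDegree⟩
  · rintro ⟨h, hdeg⟩
    have hmonic : (minpoly K f).Monic := minpoly.monic (Algebra.IsIntegral.isIntegral f)
    rwa [eq_of_monic_of_dvd_of_natDegree_le hmonic f.charpoly_monic f.minpoly_dvd_charpoly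
      (by rw [hdeg, f.charpoly_natDegree])]

lemma isField_adjoin_singleton_and_finrank_eq_iff {φ : A →ₐ[K] End K V}
    (hφ : Function.Injective φ) (x : A) :
    IsField (Algebra.adjoin K {x}) ∧ finrank K (Algebra.adjoin K {x}) = finrank K V ↔
      Irreducible (φ x).charpoly := by
  have hx : IsIntegral K x :=
    (isIntegral_algHom_iff φ hφ).1 (Algebra.IsIntegral.isIntegral (φ x))
  rw [irreducible_charpoly_iff, minpoly.algHom_eq φ hφ, isField_adjoin_singleton_iff hx,
    finrank_adjoin_singleton hx]

end AdjoinSingleton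

theorem stmt_3_general {F A V : Type*} [NontriviallyNormedField F] [IsUltrametricDist F]
    [CompleteSpace F] [Ring A] [Algebra F A] [TopologicalSpace A] [IsTopologicalAddGroup A]
    [ContinuousSMul F A] [T2Space A] [AddCommGroup V] [Module F V] [FiniteDimensional F V]
    {φ : A →ₐ[F] End F V} (hφ : Function.Injective φ) :
    IsOpen {x : A | IsField (Algebra.adjoin F {x}) ∧
      finrank F (Algebra.adjoin F {x}) = finrank F V} := by
  have : FiniteDimensional F A := .of_injective φ.toLinearMap hφ
  simpa only [isField_adjoin_singleton_and_finrank_eq_iff hφ, AlgHom.toLinearMap_apply] using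
    isOpen_setOf_irreducible_charpoly φ.toLinearMap

/-- Let `F` be a complete nonarchimedean field, `V` a finite-dimensional
`F`-vector space of dimension `d`, and `x₀` an endomorphism such that `F[x₀]` is a
field of degree `d` over `F`.  Then on an open neighborhood of `x₀` in `End(V)`,
every `x` still has `F[x]` a field of degree `d` over `F`. -/
theorem stmt_3 (F : Type*) [NontriviallyNormedField F] [IsUltrametricDist F]
    [CompleteSpace F] (V : Type*) [NormedAddCommGroup V] [NormedSpace F V]
    [FiniteDimensional F V] (d : ℕ) (hd : Module.finrank F V = d)
    (x₀ : V →L[F] V)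
    (hfield : IsField (Algebra.adjoin F ({x₀} : Set (V →L[F] V))))
    (hdeg : Module.finrank F (Algebra.adjoin F ({x₀} : Set (V →L[F] V))) = d) :
    ∃ U : Set (V →L[F] V), IsOpen U ∧ x₀ ∈ U ∧
      ∀ x ∈ U, IsField (Algebra.adjoin F ({x} : Set (V →L[F] V))) ∧
        Module.finrank F (Algebra.adjoin F ({x} : Set (V →L[F] V))) = d := by
  subst hd
  exact ⟨_, stmt_3_general (φ := (End.toContinuousLinearMap V).symm.toAlgHom)
    (End.toContinuousLinearMap V).symm.injective, ⟨hfield, hdeg⟩, fun _ hx ↦ hx⟩
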